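/- For every integer k ≥ 1, the identity G_k · (1 − X·G_{k−1}) = 1 holds in ℚ[[X]]; equivalently, G_k = 1/(1 − X·G_{k−1}). -/

import Mathlib

/-- A ballot path: a sequence of steps, each `+1` or `-1`, all of whose
partial sums are nonnegative. -/
def IsBallot (P : List ℤ) : Prop :=
  (∀ s ∈ P, s = 1 ∨ s = -1) ∧ ∀ k, 0 ≤ (P.take k).sum

/-- A Dyck path of semilength `n`: a ballot path with `2n` steps ending at level `0`. -/
def IsDyck (n : ℕ) (P : List ℤ) : Prop :=
  IsBallot P ∧ P.length = 2 * n ∧ P.sum = 0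

/-- The height of a path: the maximum of its partial sums (`0` for the empty path). -/
def pathHeight (P : List ℤ) : ℤ :=
  (((List.range (P.length + 1)).map fun k => (P.take k).sum).foldr max 0)

/-- `G k` is the generating function for Dyck paths of height at most `k`,
counted by semilength. -/
noncomputable def G (k : ℕ) : PowerSeries ℚ :=
  PowerSeries.mk fun n =>
    (Nat.card {P : List ℤ // IsDyck n P ∧ pathHeight P ≤ (k : ℤ)} : ℚ)

/-- Number of length-`m` walks from `h` to `0` staying within `[0,k]`. -/
def cnt (k : ℕ) : ℕ → ℤ → ℕ
  | 0, h => if h = 0 then 1 else 0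
  | m + 1, h => if 0 ≤ h ∧ h ≤ k then cnt k m (h + 1) + cnt k m (h - 1) else 0

/-- The finite set of such walks. -/
def walks (k : ℕ) : ℕ → ℤ → Finset (List ℤ)
  | 0, h => if h = 0 then {[]} else ∅
  | m + 1, h => if 0 ≤ h ∧ h ≤ k then
      (walks k m (h + 1)).image (List.cons 1) ∪ (walks k m (h - 1)).image (List.cons (-1)) else ∅

theorem card_walks (k m : ℕ) : ∀ h : ℤ, (walks k m h).card = cnt k m h := by
  induction m with
  | zero => intro h; simp only [walks, cnt]; split_ifs <;> simp
  | succ m ih =>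
    intro h
    simp only [walks, cnt]
    split_ifs
    · rw [Finset.card_union_of_disjoint, Finset.card_image_of_injective _ List.cons_injective,
        Finset.card_image_of_injective _ List.cons_injective, ih, ih]
      rw [Finset.disjoint_left]
      intro P h1 h2
      simp only [Finset.mem_image] at h1 h2
      obtain ⟨a, _, rfl⟩ := h1
      obtain ⟨b, _, hb⟩ := h2
      simp at hb
    · simp

theorem mem_walks (k m : ℕ) : ∀ (h : ℤ) (P : List ℤ), P ∈ walks k m h ↔
    (∀ s ∈ P, s = 1 ∨ s = -1) ∧ (∀ j, 0 ≤ h + (P.take j).sum ∧ h + (P.take j).sum ≤ k) ∧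
      P.length = m ∧ h + P.sum = 0 := by
  induction m with
  | zero =>
    intro h P
    simp only [walks]
    constructor
    · intro hP
      split_ifs at hP with h0
      · simp at hP; subst hP; simp [h0]
      · simp at hP
    · rintro ⟨_, _, h3, h4⟩
      rw [List.length_eq_zero_iff] at h3
      subst h3
      simp at h4
      simp [h4]
  | succ m ih =>
    intro h P
    simp only [walks]
    constructor
    · intro hP
      split_ifs at hP with h0
      · simp only [Finset.mem_union, Finset.mem_image, ih] at hP
        rcases hP with ⟨Q, ⟨h1, h2, h3, h4⟩, rfl⟩ | ⟨Q, ⟨h1, h2, h3, h4⟩, rfl⟩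
        all_goals
          refine ⟨?_, ?_, by simp [h3], by simp; linarith⟩
          · intro s hs
            rcases List.mem_cons.1 hs with rfl | hs
            · simp
            · exact h1 s hs
          · intro j
            cases j with
            | zero => simpa using h0
            | succ j =>
              have := h2 j
              simp only [List.take_succ_cons, List.sum_cons]
              constructor <;> linarith [this.1, this.2]
      · simp at hP
    · rintro ⟨h1, h2, h3, h4⟩
      have h0 := h2 0
      simp at h0
      rw [if_pos h0]
      cases P with
      | nil => simp at h3
      | cons s Q =>
        simp only [Finset.mem_union, Finset.mem_image, ih]
        have hQ : ∀ t ∈ Q, t = 1 ∨ t = -1 := fun t ht => h1 t (List.mem_cons_of_mem _ ht)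
        have hj : ∀ j, 0 ≤ h + s + (Q.take j).sum ∧ h + s + (Q.take j).sum ≤ k := by
          intro j
          have := h2 (j + 1)
          simp only [List.take_succ_cons, List.sum_cons] at this
          constructor <;> linarith [this.1, this.2]
        simp only [List.length_cons, List.sum_cons] at h3 h4
        rcases h1 s List.mem_cons_self with rfl | rfl
        · exact Or.inl ⟨Q, ⟨hQ, hj, by omega, by linarith⟩, rfl⟩
        · exact Or.inr ⟨Q, ⟨hQ, hj, by omega, by linarith⟩, rfl⟩

theorem foldr_max_le (l : List ℤ) (c : ℤ) (hc : 0 ≤ c) :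
    l.foldr max 0 ≤ c ↔ ∀ x ∈ l, x ≤ c := by
  induction l with
  | nil => simpa using hc
  | cons a l ih => simp [ih]

theorem pathHeight_le (P : List ℤ) (k : ℕ) :
    pathHeight P ≤ (k : ℤ) ↔ ∀ j, (P.take j).sum ≤ k := by
  unfold pathHeight
  rw [foldr_max_le _ _ (by positivity)]
  simp only [List.mem_map, List.mem_range, forall_exists_index, and_imp,
    forall_apply_eq_imp_iff₂]
  constructor
  · intro h j
    by_cases hj : j < P.length + 1
    · exact h j hj
    · have := h P.length (by omega)
      rw [List.take_length] at this
      rwa [List.take_of_length_le (by omega)]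
  · intro h j _
    exact h j

theorem coeff_G (k n : ℕ) : PowerSeries.coeff n (G k) = (cnt k (2 * n) 0 : ℚ) := by
  rw [G, PowerSeries.coeff_mk, ← card_walks, ← Nat.card_eq_finsetCard]
  congr 1
  apply Nat.card_congr
  apply Equiv.subtypeEquivRight
  intro P
  rw [mem_walks, pathHeight_le]
  simp only [IsDyck, IsBallot, zero_add, forall_and]
  tauto

theorem cnt_out (k m : ℕ) (h : ℤ) (hh : ¬ (0 ≤ h ∧ h ≤ k)) : cnt k m h = 0 := by
  cases m with
  | zero => simp only [cnt]; rw [if_neg]; rintro rfl; simp at hh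
  | succ m => simp only [cnt]; rw [if_neg hh]

theorem cnt_odd (k m : ℕ) : ∀ h : ℤ, (m + h) % 2 = 1 → cnt k m h = 0 := by
  induction m with
  | zero => intro h hh; simp only [cnt]; rw [if_neg]; rintro rfl; simp at hh
  | succ m ih =>
    intro h hh
    push_cast at hh
    simp only [cnt]
    rw [ih (h + 1) (by omega), ih (h - 1) (by omega)]
    simp

theorem cnt_conv (k m : ℕ) : ∀ h : ℤ, 0 ≤ h → cnt (k + 1) (m + 1) (h + 1) =
    ∑ p ∈ Finset.HasAntidiagonal.antidiagonal m, cnt k p.1 h * cnt (k + 1) p.2 0 := by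
  induction m with
  | zero =>
    intro h hh
    simp only [Finset.Nat.antidiagonal_zero, Finset.sum_singleton, cnt]
    push_cast
    split_ifs <;> first | omega | simp
  | succ m ih =>
    intro h hh
    rw [Finset.Nat.sum_antidiagonal_succ]
    by_cases hk : h ≤ k
    · have e1 : cnt (k + 1) (m + 1 + 1) (h + 1) =
          cnt (k + 1) (m + 1) (h + 1 + 1) + cnt (k + 1) (m + 1) h := by
        rw [cnt, if_pos (by push_cast; omega), add_sub_cancel_right]
      have e2 : ∀ i, cnt k (i + 1) h = cnt k i (h + 1) + cnt k i (h - 1) := by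
        intro i; rw [cnt, if_pos ⟨hh, hk⟩]
      rw [e1, ih (h + 1) (by omega)]
      simp only [e2, add_mul, Finset.sum_add_distrib]
      rcases hh.eq_or_lt with rfl | hpos
      · have : ∀ i, cnt k i (0 - 1) = 0 := fun i => cnt_out _ _ _ (by omega)
        simp only [this]
        simp only [cnt]
        simp
        omega
      · have := ih (h - 1) (by omega)
        rw [sub_add_cancel] at this
        rw [this]
        simp only [cnt, if_neg hpos.ne']
        omega
    · have : ∀ i, cnt k i h = 0 := fun i => cnt_out _ _ _ (by omega)
      simp only [this]
      rw [cnt_out _ _ _ (by push_cast; omega)]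
      simp

theorem sum_even (f : ℕ → ℕ) (hf : ∀ i, f (2 * i + 1) = 0) (n : ℕ) :
    ∑ i ∈ Finset.range (2 * n + 1), f i = ∑ i ∈ Finset.range (n + 1), f (2 * i) := by
  induction n with
  | zero => simp
  | succ n ih =>
    rw [show 2 * (n + 1) + 1 = 2 * n + 1 + 1 + 1 by ring, Finset.sum_range_succ,
      Finset.sum_range_succ, ih, hf, Finset.sum_range_succ _ (n + 1)]
    rfl

theorem cnt_rec (k n : ℕ) : cnt (k + 1) (2 * (n + 1)) 0 =
    ∑ p ∈ Finset.HasAntidiagonal.antidiagonal n, cnt k (2 * p.1) 0 * cnt (k + 1) (2 * p.2) 0 := by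
  have e : cnt (k + 1) (2 * (n + 1)) 0 = cnt (k + 1) (2 * n + 1) (0 + 1) := by
    rw [show 2 * (n + 1) = 2 * n + 1 + 1 by ring, cnt, if_pos ⟨le_rfl, by positivity⟩,
      cnt_out _ _ (0 - 1) (by omega), add_zero]
  rw [e, cnt_conv _ _ _ le_rfl, Finset.Nat.sum_antidiagonal_eq_sum_range_succ_mk,
    Finset.Nat.sum_antidiagonal_eq_sum_range_succ_mk]
  simp only [Nat.succ_eq_add_one]
  rw [sum_even]
  · simp only [Nat.mul_sub]
  · intro i
    rw [cnt_odd _ _ _ (by push_cast; omega), zero_mul]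

theorem G_recurrence (k : ℕ) (hk : 1 ≤ k) :
    G k * (1 - PowerSeries.X * G (k - 1)) = 1 := by
  obtain ⟨k, rfl⟩ : ∃ j, k = j + 1 := ⟨k - 1, by omega⟩
  rw [Nat.add_sub_cancel]
  have key : G (k + 1) = 1 + PowerSeries.X * (G k * G (k + 1)) := by
    ext n
    cases n with
    | zero => simp [coeff_G, cnt]
    | succ n =>
      rw [map_add, PowerSeries.coeff_succ_X_mul, PowerSeries.coeff_mul, coeff_G, cnt_rec]
      simp [coeff_G, PowerSeries.coeff_one]
  linear_combination key
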